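/- arXiv:1504.07099 — 9 statements merged into one kernel-verified Lean document; each statement's English description precedes it below -/
import Mathlib

section
/- For every prime p ≠ 3, there exists a point (x,y,z) ∈ 𝔽_p³ with x² + y² + z² = xyz, (x,y,z) ≠ (0,0,0), such that f³(x,y,z) = (x,y,z) and f(x,y,z) ≠ (x,y,z); i.e., (x,y,z) is a periodic point of f of exact period 3. (This is the existence part of Theorem A: the dynamical system (M, φ₁φ₂) with forbidden set {(0,0,0)} is strongly residually periodic with bound 3.) -/
/-- The automorphism `f = φ₁ ∘ φ₂` of the Markoff surface,
`f(x,y,z) = ((z²−1)x − zy, zx − y, z)`. -/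
def markoffMap {R : Type*} [CommRing R] (P : R × R × R) : R × R × R :=
  ((P.2.2 ^ 2 - 1) * P.1 - P.2.2 * P.2.1, P.2.2 * P.1 - P.2.1, P.2.2)

theorem exists_ab (p : ℕ) [Fact p.Prime] (h3 : (3 : ZMod p) ≠ 0) :
    ∃ a b : ZMod p, a ^ 2 + 3 * b ^ 2 = -1 := by
  rcases (Fact.out : p.Prime).eq_two_or_odd with h2 | hodd
  · subst h2
    exact ⟨1, 0, by simp [CharTwo.neg_eq]⟩
  · obtain ⟨a, b, hab⟩ := FiniteField.exists_root_sum_quadratic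
      (f := (Polynomial.C 1 * Polynomial.X ^ 2 + Polynomial.C 0 * Polynomial.X + Polynomial.C 1 : Polynomial (ZMod p)))
      (g := (Polynomial.C 3 * Polynomial.X ^ 2 + Polynomial.C 0 * Polynomial.X + Polynomial.C 0 : Polynomial (ZMod p)))
      (Polynomial.degree_quadratic one_ne_zero) (Polynomial.degree_quadratic h3)
      (by rw [ZMod.card]; exact hodd)
    refine ⟨a, b, ?_⟩
    simp at hab
    linear_combination hab

theorem stmt_0 (p : ℕ) (hp : p.Prime) (hp3 : p ≠ 3) :
    ∃ x y z : ZMod p,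
      x ^ 2 + y ^ 2 + z ^ 2 = x * y * z ∧
      (x, y, z) ≠ (0, 0, 0) ∧
      markoffMap^[3] (x, y, z) = (x, y, z) ∧
      markoffMap (x, y, z) ≠ (x, y, z) := by
  have : Fact p.Prime := ⟨hp⟩
  have h3 : (3 : ZMod p) ≠ 0 := by
    intro h
    have h' : ((3 : ℕ) : ZMod p) = 0 := by exact_mod_cast h
    rw [ZMod.natCast_eq_zero_iff] at h'
    exact hp3 ((Nat.prime_dvd_prime_iff_eq hp Nat.prime_three).1 h')
  obtain ⟨a, b, hab⟩ := exists_ab p h3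
  refine ⟨a + b, 2 * b, 1, by linear_combination hab, ?_, ?_, ?_⟩
  · simp
  · simp only [Function.iterate_succ, Function.iterate_zero, Function.comp, id, markoffMap, Prod.mk.injEq]
    refine ⟨by ring, by ring, trivial⟩
  · intro h
    simp only [markoffMap, Prod.mk.injEq] at h
    obtain ⟨h1, h2, -⟩ := h
    have e1 : a = 3 * b := by linear_combination h2
    have e2 : 3 * (2 * b) = 0 := by linear_combination -h1 - e1
    have e3 : 2 * b = 0 := (mul_eq_zero.1 e2).resolve_left h3
    apply one_ne_zero (α := ZMod p)
    subst e1
    linear_combination hab - 6 * b * e3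
end

section
/- For every natural number N there exists a prime p > N such that for every (x,y,z) ∈ 𝔽_p³ with x² + y² + z² = xyz, (x,y,z) ≠ (0,0,0) and z² ≠ 1, and for every integer n with 1 ≤ n ≤ N, one has fⁿ(x,y,z) ≠ (x,y,z). (This is Theorem B: the dynamical system (M, φ₁φ₂) with forbidden set {z² = 1} ∪ {(0,0,0)} is not strongly residually periodic over ℚ.) -/
theorem mk_iter {K : Type*} [CommRing K] (z t s : K) (h1 : t + s = z) (h2 : t * s = 1) (n : ℕ) :
    ∀ x y : K, (markoffMap^[n] (x, y, z)).2.2 = z ∧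
      (markoffMap^[n] (x, y, z)).1 - s * (markoffMap^[n] (x, y, z)).2.1
        = t ^ (2 * n) * (x - s * y) := by
  induction n with
  | zero => intro x y; simp
  | succ n ih =>
    intro x y
    rw [Function.iterate_succ_apply]
    obtain ⟨a, b⟩ := ih ((z ^ 2 - 1) * x - z * y) (z * x - y)
    refine ⟨a, ?_⟩
    have e : markoffMap (x, y, z) = ((z ^ 2 - 1) * x - z * y, z * x - y, z) := rfl
    rw [e, b, mul_add, pow_add, mul_assoc]
    congr 1
    subst h1
    linear_combination (x + t * y) * h2

theorem mk_map {R K : Type*} [CommRing R] [CommRing K] (g : R →+* K) (n : ℕ) :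
    ∀ x y z : R, markoffMap^[n] (g x, g y, g z) =
      (g (markoffMap^[n] (x, y, z)).1, g (markoffMap^[n] (x, y, z)).2.1,
        g (markoffMap^[n] (x, y, z)).2.2) := by
  induction n with
  | zero => intro x y z; simp
  | succ n ih =>
    intro x y z
    rw [Function.iterate_succ_apply, Function.iterate_succ_apply]
    have e : markoffMap (x, y, z) = ((z ^ 2 - 1) * x - z * y, z * x - y, z) := rfl
    rw [e, ← ih]
    simp [markoffMap]

theorem exists_p (N : ℕ) : ∃ p : ℕ, p.Prime ∧ p > N ∧ p % 72 = 67 ∧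
    ∀ q : ℕ, q.Prime → 5 ≤ q → q ≤ 2 * N → p % q = 2 := by
  set S := (Finset.range (2 * N + 1)).filter (fun q => q.Prime ∧ 5 ≤ q) with hS
  have hc : Nat.Coprime 72 (∏ q ∈ S, q) := by
    refine Nat.Coprime.prod_right fun q hq => ?_
    simp only [hS, Finset.mem_filter] at hq
    obtain ⟨_, hq, h5⟩ := hq
    refine ((Nat.Prime.coprime_iff_not_dvd hq).2 fun h => ?_).symm
    have h' : q ∣ 2 ^ 3 * 3 ^ 2 := by simpa using h
    rcases (Nat.Prime.dvd_mul hq).1 h' with h | h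
    · have := Nat.le_of_dvd (by norm_num) (hq.dvd_of_dvd_pow h); omega
    · have := Nat.le_of_dvd (by norm_num) (hq.dvd_of_dvd_pow h); omega
  have hL : Nat.Coprime 2 (∏ q ∈ S, q) := Nat.Coprime.coprime_dvd_left (by norm_num) hc
  obtain ⟨a, ha1, ha2⟩ := Nat.chineseRemainder hc 67 2
  have hL0 : (∏ q ∈ S, q) ≠ 0 := by
    refine Finset.prod_ne_zero_iff.2 fun q hq => ?_
    simp only [hS, Finset.mem_filter] at hq
    omega
  have hco : Nat.Coprime a (72 * ∏ q ∈ S, q) := by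
    refine Nat.Coprime.mul_right ?_ ?_
    · rw [Nat.Coprime, ha1.gcd_eq]; norm_num
    · rw [Nat.Coprime, ha2.gcd_eq]; exact hL
  obtain ⟨p, hp1, hp2, hp3⟩ := Nat.forall_exists_prime_gt_and_modEq N
    (mul_ne_zero (by norm_num) hL0) hco
  refine ⟨p, hp2, hp1, ?_, ?_⟩
  · exact (hp3.of_mul_right _).trans ha1
  · intro q hq h5 hN
    have hm : q ∈ S := by simp [hS]; exact ⟨by omega, hq, h5⟩
    have h := ((hp3.of_mul_left _).trans ha2).of_dvd (Finset.dvd_prod_of_mem _ hm)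
    rw [Nat.ModEq] at h
    rw [h]; exact Nat.mod_eq_of_lt (by omega)

theorem dvd6 (d : ℕ) (h4 : ¬ 4 ∣ d) (h9 : ¬ 9 ∣ d)
    (h : ∀ q : ℕ, q.Prime → 5 ≤ q → ¬ q ∣ d) : d ∣ 6 := by
  rw [Nat.dvd_iff_prime_pow_dvd_dvd]
  intro q k hq hd
  rcases k with _ | _ | k
  · simp
  · simp only [zero_add, pow_one] at *
    by_cases h5 : 5 ≤ q
    · exact absurd hd (h q hq h5)
    · have := hq.two_le
      interval_cases q <;> revert hq <;> norm_num
  · exfalso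
    have h2 : q ^ 2 ∣ d := (pow_dvd_pow q (by omega)).trans hd
    by_cases h5 : 5 ≤ q
    · exact h q hq h5 ((dvd_pow_self q two_ne_zero).trans h2)
    · have := hq.two_le
      interval_cases q
      · exact h4 h2
      · exact h9 h2
      · revert hq; norm_num

theorem dvd4 (d : ℕ) (h8 : ¬ 8 ∣ d) (h3 : ¬ 3 ∣ d)
    (h : ∀ q : ℕ, q.Prime → 5 ≤ q → ¬ q ∣ d) : d ∣ 4 := by
  rw [Nat.dvd_iff_prime_pow_dvd_dvd]
  intro q k hq hd
  rcases Nat.eq_zero_or_pos k with rfl | hk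
  · simp
  have h1 : q ∣ d := (dvd_pow_self q hk.ne').trans hd
  have h5 : ¬ 5 ≤ q := fun h5 => h q hq h5 h1
  have := hq.two_le
  interval_cases q
  · by_cases hk3 : 3 ≤ k
    · exact absurd ((pow_dvd_pow 2 hk3).trans hd) h8
    · exact pow_dvd_pow 2 (show k ≤ 2 by omega)
  · exact absurd h1 h3
  · revert hq; norm_num

theorem stmt_1 (N : ℕ) :
    ∃ p : ℕ, p.Prime ∧ p > N ∧
      ∀ x y z : ZMod p,
        x ^ 2 + y ^ 2 + z ^ 2 = x * y * z →
        (x, y, z) ≠ (0, 0, 0) →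
        z ^ 2 ≠ 1 →
        ∀ n : ℕ, 1 ≤ n → n ≤ N → markoffMap^[n] (x, y, z) ≠ (x, y, z) := by
  obtain ⟨p, hp, hpN, h72, hq⟩ := exists_p N
  refine ⟨p, hp, hpN, ?_⟩
  intro x y z hM h0 hz n hn hnN hfix
  haveI : Fact p.Prime := ⟨hp⟩
  have hp43 : p % 4 = 3 := by omega
  -- z ≠ 0
  have hz0 : z ≠ 0 := by
    rintro rfl
    by_cases hy : y = 0
    · subst hy
      have : x = 0 := by simpa using hM
      exact h0 (by rw [this])
    · exact ZMod.mod_four_ne_three_of_sq_eq_neg_sq' (p := p) (x := x) (y := y) hy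
        (by linear_combination hM) hp43
  have h2ne : (2 : ZMod p) ≠ 0 := by
    intro h
    have h' : ((2 : ℕ) : ZMod p) = 0 := by exact_mod_cast h
    rw [ZMod.natCast_eq_zero_iff] at h'
    have := Nat.le_of_dvd (by norm_num) h'
    omega
  have hz4 : z ^ 2 ≠ 4 := by
    intro h
    have h4 : (4 : ZMod p) ≠ 0 := by
      have : (4 : ZMod p) = 2 * 2 := by norm_num
      rw [this]; exact mul_ne_zero h2ne h2ne
    exact ZMod.mod_four_ne_three_of_sq_eq_neg_sq' (p := p) (x := 2 * x - z * y) (y := 4) h4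
        (by linear_combination 4 * hM + (y ^ 2 - 4) * h) hp43
  let K := AlgebraicClosure (ZMod p)
  let g : ZMod p →+* K := algebraMap (ZMod p) K
  have ginj : Function.Injective g := g.injective
  obtain ⟨t, ht⟩ : ∃ t : K, t ^ 2 - g z * t + 1 = 0 := by
    have hdeg : (Polynomial.X ^ 2 - Polynomial.C (g z) * Polynomial.X + 1 :
        Polynomial K).degree = 2 := by compute_degree!
    obtain ⟨t, ht⟩ := IsAlgClosed.exists_root _ (show _ ≠ (0 : WithBot ℕ) by rw [hdeg]; norm_num)
    exact ⟨t, by simpa using ht⟩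
  set s := g z - t with hs
  have hts : t * s = 1 := by rw [hs]; linear_combination -ht
  have hst : s * t = 1 := by rw [mul_comm]; exact hts
  have ht0 : t ≠ 0 := left_ne_zero_of_mul_eq_one hts
  have hgf := mk_map g n x y z
  rw [hfix] at hgf
  have e1 := (mk_iter (g z) t s (by rw [hs]; ring) hts n (g x) (g y)).2
  have e2 := (mk_iter (g z) s t (by rw [hs]; ring) hst n (g x) (g y)).2
  rw [hgf] at e1 e2
  simp only at e1 e2
  have htn : t ^ (2 * n) = 1 := by
    by_contra hne
    have a1 : g x - s * g y = 0 := by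
      have : (t ^ (2 * n) - 1) * (g x - s * g y) = 0 := by linear_combination -e1
      exact (mul_eq_zero.1 this).resolve_left (sub_ne_zero.2 hne)
    have hsn : s ^ (2 * n) ≠ 1 := by
      intro h
      apply hne
      have := mul_pow t s (2 * n)
      rw [hts, h, one_pow, mul_one] at this
      exact this.symm
    have a2 : g x - t * g y = 0 := by
      have : (s ^ (2 * n) - 1) * (g x - t * g y) = 0 := by linear_combination -e2
      exact (mul_eq_zero.1 this).resolve_left (sub_ne_zero.2 hsn)
    have a3 : (t - s) * g y = 0 := by linear_combination a1 - a2
    rcases mul_eq_zero.1 a3 with h | h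
    · have : t ^ 2 = 1 := by linear_combination hts + t * h
      exact hne (by rw [pow_mul, this, one_pow])
    · have hx : g x = 0 := by linear_combination a1 + s * h
      have hx' : x = 0 := ginj (by rw [hx, map_zero])
      have hy' : y = 0 := ginj (by rw [h, map_zero])
      subst hx' hy'
      exact hz0 (by simpa using hM)
  have hfrob : t ^ (p - 1) = 1 ∨ t ^ (p + 1) = 1 := by
    have hgz : g z ^ p = g z := by rw [← map_pow, ZMod.pow_card]
    have hF : (t ^ p) ^ 2 - g z * t ^ p + 1 = 0 := by
      have := congrArg (frobenius K p) ht
      simp only [map_add, map_sub, map_mul, map_pow, map_one, map_zero, frobenius_def] at this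
      rwa [hgz] at this
    have : (t ^ p - t) * (t ^ p - s) = 0 := by
      rw [hs]; linear_combination hF - ht
    rcases mul_eq_zero.1 this with h | h
    · left
      have h1 : t ^ (p - 1) * t = t := by
        rw [← pow_succ, Nat.sub_add_cancel hp.one_le]; exact sub_eq_zero.1 h
      exact mul_right_cancel₀ ht0 (by rw [h1, one_mul])
    · right
      rw [pow_succ, sub_eq_zero.1 h, hst]
  have hd : orderOf t ∣ 2 * n := orderOf_dvd_of_pow_eq_one htn
  have hle : orderOf t ≤ 2 * N := (Nat.le_of_dvd (by omega) hd).trans (by omega)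
  have hpos : 0 < orderOf t := Nat.pos_of_dvd_of_pos hd (by omega)
  have gz : g z = t + s := by rw [hs]; ring
  have c4 : t ^ 2 ≠ 1 := by
    intro h
    apply hz4
    apply ginj
    rw [map_pow, gz, map_ofNat]
    have hsq : s ^ 2 = 1 := by
      have : t ^ 2 * s ^ 2 = 1 := by rw [← mul_pow, hts, one_pow]
      rwa [h, one_mul] at this
    linear_combination h + hsq + 2 * hts
  rcases hfrob with h | h
  · have hdp := orderOf_dvd_of_pow_eq_one h
    have h6 : orderOf t ∣ 6 := by
      refine dvd6 _ (fun hh => ?_) (fun hh => ?_) (fun q hqp h5 hh => ?_)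
      · have := hh.trans hdp; omega
      · have := hh.trans hdp; omega
      · have h1 := hq q hqp h5 ((Nat.le_of_dvd hpos hh).trans hle)
        have h2 : (p - 1) % q = 0 := Nat.mod_eq_zero_of_dvd (hh.trans hdp)
        have h3 : q ∣ p - 2 := (Nat.modEq_iff_dvd' (by omega)).1
          (show 2 % q = p % q by rw [h1, Nat.mod_eq_of_lt (by omega)])
        have h4 : q ∣ (p - 1) - (p - 2) := Nat.dvd_sub (hh.trans hdp) h3
        have := Nat.le_of_dvd (by omega) h4
        omega
    have h6 := orderOf_dvd_iff_pow_eq_one.1 h6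
    have hp3 : (t ^ 2 - 1) * ((t ^ 2 + t + 1) * (t ^ 2 - t + 1)) = 0 := by
      linear_combination h6
    have hp3 := (mul_eq_zero.1 hp3).resolve_left (sub_ne_zero.2 c4)
    apply hz
    apply ginj
    rw [map_pow, map_one]
    have : t ^ 2 * (g z ^ 2 - 1) = 0 := by
      linear_combination hp3 - (g z * t + t ^ 2 + 1) * ht
    have := (mul_eq_zero.1 this).resolve_left (pow_ne_zero 2 ht0)
    exact sub_eq_zero.1 this
  · have hdp := orderOf_dvd_of_pow_eq_one h
    have h6 : orderOf t ∣ 4 := by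
      refine dvd4 _ (fun hh => ?_) (fun hh => ?_) (fun q hqp h5 hh => ?_)
      · have := hh.trans hdp; omega
      · have := hh.trans hdp; omega
      · have h1 := hq q hqp h5 ((Nat.le_of_dvd hpos hh).trans hle)
        have h3 : q ∣ p - 2 := (Nat.modEq_iff_dvd' (by omega)).1
          (show 2 % q = p % q by rw [h1, Nat.mod_eq_of_lt (by omega)])
        have h4 : q ∣ (p + 1) - (p - 2) := Nat.dvd_sub (hh.trans hdp) h3
        have := Nat.le_of_dvd (by omega) h4
        omega
    have h6 := orderOf_dvd_iff_pow_eq_one.1 h6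
    have hp3 : (t ^ 2 - 1) * (t ^ 2 + 1) = 0 := by
      linear_combination h6
    have hp3 := (mul_eq_zero.1 hp3).resolve_left (sub_ne_zero.2 c4)
    apply hz0
    apply ginj
    rw [map_zero]
    have : g z * t = 0 := by linear_combination hp3 - ht
    exact (mul_eq_zero.1 this).resolve_right ht0
end

section
/- The only periodic point of f on the rational points of the Markoff surface is the origin: if (x,y,z) ∈ ℚ³ satisfies x² + y² + z² = xyz and fⁿ(x,y,z) = (x,y,z) for some integer n ≥ 1, then (x,y,z) = (0,0,0). -/
theorem mk_grow (x y z : ℚ) (hz : 2 < |z|) (hx : x ≠ 0) (h : |y| ≤ |x|) :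
    |x| < |z * x - y| := by
  have h1 : |z * x| - |y| ≤ |z * x - y| := abs_sub_abs_le_abs_sub _ _
  rw [abs_mul] at h1
  have : 0 < |x| := abs_pos.mpr hx
  nlinarith

theorem stmt_2 (x y z : ℚ)
    (hM : x ^ 2 + y ^ 2 + z ^ 2 = x * y * z)
    (hper : ∃ n : ℕ, 1 ≤ n ∧ markoffMap^[n] (x, y, z) = (x, y, z)) :
    (x, y, z) = ((0 : ℚ), (0 : ℚ), (0 : ℚ)) := by
  rcases le_or_gt |z| 2 with hz | hz
  · have h1 : x * y * z ≤ |x| * |y| * |z| := by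
      rw [← abs_mul, ← abs_mul]; exact le_abs_self _
    have h2 : |x| * |y| * |z| ≤ |x| * |y| * 2 := by gcongr
    have hz0 : z = 0 := by
      have := sq_nonneg (|x| - |y|)
      have e1 := sq_abs x
      have e2 := sq_abs y
      have : z ^ 2 ≤ 0 := by nlinarith
      exact pow_eq_zero_iff (two_ne_zero) |>.mp (le_antisymm this (sq_nonneg z))
    subst hz0
    have hx : x = 0 := by
      refine pow_eq_zero_iff (two_ne_zero) |>.mp (le_antisymm ?_ (sq_nonneg x))
      nlinarith [sq_nonneg y]
    have hy : y = 0 := by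
      refine pow_eq_zero_iff (two_ne_zero) |>.mp (le_antisymm ?_ (sq_nonneg y))
      nlinarith [sq_nonneg x]
    simp [hx, hy]
  · exfalso
    obtain ⟨n, hn, hp⟩ := hper
    set s : ℕ → ℚ × ℚ × ℚ := fun k => markoffMap^[k] (x, y, z) with hs
    have hsucc : ∀ k, s (k+1) = markoffMap (s k) := fun k =>
      Function.iterate_succ_apply' _ _ _
    have hzk : ∀ k, (s k).2.2 = z := by
      intro k
      induction k with
      | zero => rfl
      | succ k ih => rw [hsucc]; exact ih
    have hb : ∀ k, (s (k+1)).2.1 = z * (s k).1 - (s k).2.1 := by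
      intro k; rw [hsucc]; simp only [markoffMap, hzk]
    have ha : ∀ k, (s (k+1)).1 = z * (s (k+1)).2.1 - (s k).1 := by
      intro k; rw [hb, hsucc]; simp only [markoffMap, hzk]; ring
    have hMk : ∀ k, (s k).1 ^ 2 + (s k).2.1 ^ 2 + z ^ 2 = (s k).1 * (s k).2.1 * z := by
      intro k
      induction k with
      | zero => exact hM
      | succ k ih => rw [ha, hb]; linear_combination ih
    have hsp : ∀ k, s (k + n) = s k := by
      intro k
      simp only [hs, Function.iterate_add_apply, hp]
    have hz0 : z ≠ 0 := by rintro rfl; norm_num at hz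
    have hne : ∀ k, (s k).1 ≠ 0 := by
      intro k h0
      have := hMk k
      rw [h0] at this
      have : 0 < z ^ 2 := by positivity
      nlinarith [sq_nonneg (s k).2.1]
    have hne2 : ∀ k, (s k).2.1 ≠ 0 := by
      intro k h0
      have := hMk k
      rw [h0] at this
      have : 0 < z ^ 2 := by positivity
      nlinarith [sq_nonneg (s k).1]
    by_cases hA : ∃ k, |(s k).2.1| ≤ |(s k).1|
    · obtain ⟨k, hk⟩ := hA
      have step : ∀ m, |(s m).2.1| ≤ |(s m).1| →
          |(s m).1| < |(s (m+1)).2.1| ∧ |(s (m+1)).2.1| < |(s (m+1)).1| := by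
        intro m hm
        have h1 : |(s m).1| < |(s (m+1)).2.1| := by
          rw [hb]; exact mk_grow _ _ _ hz (hne m) hm
        refine ⟨h1, ?_⟩
        rw [ha]; exact mk_grow _ _ _ hz (hne2 _) h1.le
      have hall : ∀ m, |(s (k+m)).2.1| ≤ |(s (k+m)).1| := by
        intro m
        induction m with
        | zero => exact hk
        | succ m ih => exact (step _ ih).2.le
      have hmono : StrictMono (fun m => |(s (k+m)).1|) :=
        strictMono_nat_of_lt_succ fun m => (step _ (hall m)).1.trans (step _ (hall m)).2
      have := hmono (show 0 < n by omega)
      simp [hsp] at this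
    · push Not at hA
      have hanti : StrictAnti (fun m => |(s m).2.1|) := by
        refine strictAnti_nat_of_succ_lt fun m => ?_
        have h1 := mk_grow _ _ _ hz (hne2 (m+1)) (hA (m+1)).le
        have h2 : (s m).1 = z * (s (m+1)).2.1 - (s (m+1)).1 := by rw [ha]; ring
        rw [← h2] at h1
        exact h1.trans (hA m)
      have := hanti (show 0 < 0 + n by omega)
      simp only [hsp] at this
      exact lt_irrefl _ this
end

section
/- For every prime p with p ≡ 3 (mod 4), if (x,y,z) ∈ 𝔽_p³ satisfies x² + y² + z² = xyz and f(f(x,y,z)) = (x,y,z), then (x,y,z) = (0,0,0); i.e., modulo such primes the Markoff surface has no point of period 2 (or less) under f other than the origin. Together with the absence of nontrivial fixed points, this shows the bound 3 in Theorem A is sharp. -/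
theorem stmt_4 (p : ℕ) (hp : p.Prime) (hp4 : p % 4 = 3)
    (x y z : ZMod p)
    (hM : x ^ 2 + y ^ 2 + z ^ 2 = x * y * z)
    (hper : markoffMap (markoffMap (x, y, z)) = (x, y, z)) :
    (x, y, z) = ((0 : ZMod p), (0 : ZMod p), (0 : ZMod p)) := by
  haveI : Fact p.Prime := ⟨hp⟩
  have key : ∀ a b : ZMod p, a ^ 2 + b ^ 2 = 0 → b = 0 := by
    intro a b h
    by_contra hb
    have hs : IsSquare (-1 : ZMod p) := by
      refine ⟨a / b, ?_⟩
      field_simp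
      linear_combination -h
    exact (ZMod.exists_sq_eq_neg_one_iff.mp hs) hp4
  have h2 : (2 : ZMod p) ≠ 0 := by
    intro h
    have h' : ((2 : ℕ) : ZMod p) = 0 := by exact_mod_cast h
    rw [ZMod.natCast_eq_zero_iff] at h'
    have := Nat.le_of_dvd (by norm_num) h'
    have := hp.two_le
    have : p = 2 := by omega
    omega
  simp only [markoffMap, Prod.mk.injEq] at hper
  obtain ⟨e1, e2, -⟩ := hper
  by_cases hz : z = 0
  · subst hz
    have hx := key y x (by linear_combination hM)
    have hy := key x y (by linear_combination hM)
    simp [hx, hy]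
  have e3 : z * y = (z ^ 2 - 2) * x := by
    apply mul_left_cancel₀ hz
    linear_combination -e2
  have e4 : (z ^ 2 - 4) * x = 0 := by
    have e5 : z * ((z ^ 2 - 4) * x) = 0 := by
      linear_combination z * e1 + (z * (z ^ 2 - 2)) * e3
    exact (mul_eq_zero.mp e5).resolve_left hz
  rcases mul_eq_zero.mp e4 with h | h
  · exfalso
    have e6 : z * y = 2 * x := by linear_combination e3 + x * h
    have e7 : (2 : ZMod p) ^ 4 = 0 := by
      linear_combination 4 * hM - 4 * h + 4 * x * e6 - (z * y + 2 * x) * e6 + y ^ 2 * h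
    exact h2 (pow_eq_zero_iff (by norm_num) |>.mp e7)
  · subst h
    have hy : y = 0 := by simpa [hz] using e3
    subst hy
    exact absurd (by simpa using hM) hz
end

section
/- (Lemma 1.) Let p be an odd prime and let (x,y,z) ∈ 𝔽_p³ satisfy x² + y² + z² = xyz with (x,y,z) ≠ (0,0,0). If (x,y,z) is a periodic point of f of exact period n and gcd(n, p) = 1, then n divides p² − 1. -/
lemma mk_pow_eq {p : ℕ} [Fact p.Prime] (k : ℕ) (hk : p = 2 * k + 1) (A : Matrix (Fin 2) (Fin 2) (ZMod p))
    (t : ZMod p) (hA : A * A = t • A - 1) : A ^ (p ^ 3) = A ^ p := by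
  have hp : p.Prime := Fact.out
  have hk0 : k ≠ 0 := by
    rintro rfl
    exact hp.one_lt.ne' (by simpa using hk)
  have h2 : (2 : ZMod p) ≠ 0 := by
    intro h
    have : ((2 : ℕ) : ZMod p) = 0 := by exact_mod_cast h
    rw [ZMod.natCast_eq_zero_iff] at this
    have := Nat.le_of_dvd (by norm_num) this
    omega
  obtain ⟨D, hD⟩ : ∃ D, D = (2 : ZMod p) • A - t • (1 : Matrix (Fin 2) (Fin 2) (ZMod p)) := ⟨_, rfl⟩
  have hDD : D ^ 2 = (t ^ 2 - 4) • (1 : Matrix (Fin 2) (Fin 2) (ZMod p)) := by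
    rw [hD, pow_two]
    simp only [sub_mul, mul_sub, smul_mul_assoc, mul_smul_comm, hA, one_mul, mul_one]
    module
  have h2A : (2 : ZMod p) • A = t • (1 : Matrix (Fin 2) (Fin 2) (ZMod p)) + D := by
    rw [hD]; abel
  have hc : Commute (t • (1 : Matrix (Fin 2) (Fin 2) (ZMod p))) D :=
    (Commute.one_left D).smul_left t
  generalize t ^ 2 - 4 = d at hDD
  have hodd : ∀ m, D ^ (2 * m + 1) = d ^ m • D := by
    intro m
    rw [pow_succ, pow_mul, hDD, smul_pow, one_pow, smul_mul_assoc, one_mul]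
  have key : ∀ i, (2 : ZMod p) • A ^ (p ^ i) =
      t • (1 : Matrix (Fin 2) (Fin 2) (ZMod p)) + D ^ (p ^ i) := by
    intro i
    have h := congrArg (fun M => M ^ (p ^ i)) h2A
    beta_reduce at h
    rw [add_pow_char_pow_of_commute p i hc, smul_pow, smul_pow, one_pow, ZMod.pow_card_pow,
      ZMod.pow_card_pow] at h
    exact h
  have e3 : p ^ 3 = 2 * (k + (p - 1) * (p * (k + 1))) + 1 := by
    have : p - 1 = 2 * k := by omega
    rw [this, hk]; ring
  have hd : d ^ (k + (p - 1) * (p * (k + 1))) = d ^ k := by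
    by_cases h0 : d = 0
    · subst h0
      rw [zero_pow hk0, zero_pow (by omega)]
    · rw [pow_add, pow_mul, ZMod.pow_card_sub_one_eq_one h0, one_pow, mul_one]
  have hDp : D ^ (p ^ 3) = D ^ (p ^ 1) := by
    rw [e3, hodd, hd, pow_one]
    rw [← hodd, ← hk]
  have := key 3
  rw [hDp, ← key 1, pow_one] at this
  exact smul_right_injective _ h2 this

theorem stmt_10 (p : ℕ) (hp : p.Prime) (hodd : Odd p)
    (x y z : ZMod p)
    (hM : x ^ 2 + y ^ 2 + z ^ 2 = x * y * z)
    (hne : (x, y, z) ≠ (0, 0, 0))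
    (n : ℕ) (hn : 1 ≤ n)
    (hper : markoffMap^[n] (x, y, z) = (x, y, z))
    (hmin : ∀ m : ℕ, 1 ≤ m → m < n → markoffMap^[m] (x, y, z) ≠ (x, y, z))
    (hgcd : Nat.gcd n p = 1) :
    n ∣ p ^ 2 - 1 := by
  haveI : Fact p.Prime := ⟨hp⟩
  obtain ⟨k, hk⟩ := hodd
  obtain ⟨A, hAdef⟩ : ∃ A : Matrix (Fin 2) (Fin 2) (ZMod p), A = !![z ^ 2 - 1, -z; z, -1] := ⟨_, rfl⟩
  have hA : A * A = (z ^ 2 - 2) • A - 1 := by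
    subst hAdef
    ext i j
    fin_cases i <;> fin_cases j <;> simp [Matrix.mul_apply, Fin.sum_univ_two] <;> ring
  have hpow := mk_pow_eq k hk A _ hA
  have hinv : A * ((z ^ 2 - 2) • 1 - A) = 1 := by
    rw [mul_sub, hA, mul_smul_comm, mul_one]; abel
  have hu : IsUnit A := (Matrix.isUnit_iff_isUnit_det A).2
    (Matrix.isUnit_det_of_right_inverse hinv)
  have hone : A ^ (p * (p ^ 2 - 1)) = 1 := by
    have e : p ^ 3 = p + p * (p ^ 2 - 1) := by
      have : 1 ≤ p ^ 2 := Nat.one_le_pow _ _ hp.pos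
      obtain ⟨c, hc⟩ := Nat.exists_eq_add_of_le this
      rw [hc, Nat.add_sub_cancel_left, pow_succ, hc]; ring
    rw [e, pow_add] at hpow
    exact (hu.pow p).mul_left_cancel (by rw [hpow, mul_one])
  have hit : ∀ m, markoffMap^[m] (x, y, z) =
      ((A ^ m).mulVec ![x, y] 0, (A ^ m).mulVec ![x, y] 1, z) := by
    intro m
    induction m with
    | zero => simp
    | succ m ih =>
      rw [Function.iterate_succ_apply', ih, pow_succ', ← Matrix.mulVec_mulVec]
      generalize (A ^ m).mulVec ![x, y] = v
      subst hAdef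
      simp [markoffMap, Matrix.mulVec, dotProduct, Fin.sum_univ_two]
      constructor <;> ring
  have hP : Function.IsPeriodicPt markoffMap (p * (p ^ 2 - 1)) (x, y, z) := by
    unfold Function.IsPeriodicPt Function.IsFixedPt
    rw [hit, hone]; simp
  have hper' : Function.IsPeriodicPt markoffMap n (x, y, z) := hper
  have hmp : Function.minimalPeriod markoffMap (x, y, z) = n := by
    refine le_antisymm (hper'.minimalPeriod_le hn) ?_
    by_contra! h
    exact hmin _ (hper'.minimalPeriod_pos hn) h (Function.isPeriodicPt_minimalPeriod _ _)
  have := hP.minimalPeriod_dvd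
  rw [hmp] at this
  exact Nat.Coprime.dvd_of_dvd_mul_left hgcd this
end

section
/- (Lemma 3.) For every natural number k there exists a prime p with p > k and p ≡ 19 (mod 24) such that no prime q ≤ k divides (p² − 1)/24; equivalently, there is an increasing sequence of primes p_k ≡ 19 (mod 24) with ω(p_k) → ∞, where ω(p) is the smallest prime factor of (p² − 1)/24. -/
theorem stmt_12 (k : ℕ) :
    ∃ p : ℕ, p.Prime ∧ p > k ∧ p % 24 = 19 ∧
      ∀ q : ℕ, q.Prime → q ≤ k → ¬ q ∣ (p ^ 2 - 1) / 24 := by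
  let N : ℕ := ∏ q ∈ (Finset.range (k + 1)).filter (fun q => q.Prime ∧ 5 ≤ q), q
  have hN0 : N ≠ 0 := by
    refine Finset.prod_ne_zero_iff.mpr fun q hq => ?_
    exact (Finset.mem_filter.mp hq).2.1.ne_zero
  have hcop : ∀ m : ℕ, (∀ q : ℕ, q.Prime → 5 ≤ q → q.Coprime m) → N.Coprime m := by
    intro m hm
    refine Nat.Coprime.prod_left fun q hq => ?_
    have h := (Finset.mem_filter.mp hq).2
    exact hm q h.1 h.2
  have h2 : ∀ q : ℕ, q.Prime → 5 ≤ q → q.Coprime 2 := fun q hq h5 =>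
    (Nat.coprime_primes hq Nat.prime_two).mpr (by omega)
  have h3 : ∀ q : ℕ, q.Prime → 5 ≤ q → q.Coprime 3 := fun q hq h5 =>
    (Nat.coprime_primes hq Nat.prime_three).mpr (by omega)
  have hN72 : Nat.Coprime 72 N := by
    refine (hcop 72 fun q hq h5 => ?_).symm
    have : (72 : ℕ) = 2 ^ 3 * 3 ^ 2 := by norm_num
    rw [this]
    exact Nat.Coprime.mul_right ((h2 q hq h5).pow_right 3) ((h3 q hq h5).pow_right 2)
  obtain ⟨a, ha1, ha2⟩ := Nat.chineseRemainder hN72 43 2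
  have hac : a.Coprime (72 * N) := by
    refine Nat.Coprime.mul_right ?_ ?_
    · rw [Nat.Coprime, ha1.gcd_eq]; norm_num
    · rw [Nat.Coprime, ha2.gcd_eq]; exact (hcop 2 h2).symm
  obtain ⟨p, hpk, hp, hpa⟩ := Nat.forall_exists_prime_gt_and_modEq k
    (mul_ne_zero (by norm_num) hN0 : 72 * N ≠ 0) hac
  have hp72 : p ≡ 43 [MOD 72] := (hpa.of_mul_right N).trans ha1
  have hpN : p ≡ 2 [MOD N] := (hpa.of_mul_left 72).trans ha2
  have hpm : p % 72 = 43 := hp72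
  obtain ⟨s, rfl⟩ : ∃ s, p = 72 * s + 43 := ⟨p / 72, by omega⟩
  have hm : (72 * s + 43) ^ 2 - 1 = 24 * ((12 * s + 7) * (18 * s + 11)) := by
    have : (72 * s + 43) ^ 2 = 24 * ((12 * s + 7) * (18 * s + 11)) + 1 := by ring
    omega
  refine ⟨_, hp, hpk, by omega, fun q hq hqk hd => ?_⟩
  rw [hm, Nat.mul_div_cancel_left _ (by norm_num)] at hd
  by_cases h5 : 5 ≤ q
  · have hqN : q ∣ N := Finset.dvd_prod_of_mem (fun q => q)
      (Finset.mem_filter.mpr ⟨Finset.mem_range.mpr (by omega), hq, h5⟩)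
    have h1 : (72 * s + 43) ^ 2 ≡ 2 ^ 2 [MOD q] := (hpN.of_dvd hqN).pow 2
    have h4 : (72 * s + 43) ^ 2 = 24 * ((12 * s + 7) * (18 * s + 11)) + 1 := by ring
    have h6 : 24 * ((12 * s + 7) * (18 * s + 11)) ≡ 3 [MOD q] := by
      rw [h4] at h1
      exact Nat.ModEq.add_right_cancel' 1 h1
    have h7 : q ∣ 3 := (h6.dvd_iff dvd_rfl).mp (hd.mul_left 24)
    have := Nat.le_of_dvd (by norm_num) h7
    omega
  · have : q = 2 ∨ q = 3 := by
      have := hq.two_le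
      have : q ≠ 4 := by rintro rfl; revert hq; decide
      omega
    rcases (hq.dvd_mul).mp hd with h | h <;> rcases this with rfl | rfl <;> omega
end

section
/- The Hénon map g(x,y) = (y, (y²−2)(y²−3)(y²−6) + x) on ℚ² has no periodic points: for every (x,y) ∈ ℚ² and every integer n ≥ 1, gⁿ(x,y) ≠ (x,y). -/
/-- The Hénon map `g(x,y) = (y, (y²−2)(y²−3)(y²−6) + x)`. -/
def henonMap {R : Type*} [CommRing R] (P : R × R) : R × R :=
  (P.2, (P.2 ^ 2 - 2) * (P.2 ^ 2 - 3) * (P.2 ^ 2 - 6) + P.1)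

theorem henon_max {α : Type*} [LinearOrder α] (b : ℕ → α) (n : ℕ) (hn : 1 ≤ n)
    (hb : ∀ k, b (k + n) = b k) : ∃ m, ∀ k, b k ≤ b (m + 1) := by
  obtain ⟨m, _, hm⟩ := Finset.exists_max_image (Finset.range n) b ⟨0, by simp; omega⟩
  refine ⟨m + n - 1, fun k => ?_⟩
  have h1 : m + n - 1 + 1 = m + n := by omega
  rw [h1, hb]
  have h2 : b (k % n) = b k := (show Function.Periodic b n from hb).map_mod_nat k
  rw [← h2]
  exact hm _ (Finset.mem_range.2 (Nat.mod_lt _ hn))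

theorem henon_den (q : ℚ) :
    ((q ^ 2 - 2) * (q ^ 2 - 3) * (q ^ 2 - 6)).den = q.den ^ 6 := by
  have hd : (q.den : ℚ) ≠ 0 := by exact_mod_cast q.den_ne_zero
  have hq : q = (q.num : ℚ) / (q.den : ℚ) := (Rat.num_div_den q).symm
  set c : ℤ := -11 * q.num ^ 4 * q.den + 36 * q.num ^ 2 * q.den ^ 3 - 36 * q.den ^ 5 with hc
  have key : (q ^ 2 - 2) * (q ^ 2 - 3) * (q ^ 2 - 6)
      = ((q.num ^ 6 + c * q.den : ℤ) : ℚ) / ((q.den ^ 6 : ℤ) : ℚ) := by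
    rw [hc]
    push_cast
    generalize (q.den : ℚ) = d at *
    generalize (q.num : ℚ) = u at *
    rw [hq]
    field_simp
    ring
  have hcop : IsCoprime (q.num ^ 6 + c * q.den) ((q.den : ℤ) ^ 6) := by
    apply IsCoprime.pow_right
    apply IsCoprime.add_mul_right_left
    apply IsCoprime.pow_left
    exact Rat.isCoprime_num_den q
  have := Rat.den_div_eq_of_coprime (a := q.num ^ 6 + c * q.den) (b := (q.den : ℤ) ^ 6)
    (by have := q.den_pos; positivity) (Int.isCoprime_iff_nat_coprime.1 hcop)
  rw [key]
  exact_mod_cast this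

theorem stmt_16 (x y : ℚ) (n : ℕ) (hn : 1 ≤ n) :
    henonMap^[n] (x, y) ≠ (x, y) := by
  intro h
  obtain ⟨a, ha⟩ : ∃ a : ℕ → ℚ, ∀ k, a k = (henonMap^[k] (x, y)).1 := ⟨_, fun _ => rfl⟩
  have hper : ∀ k, a (k + n) = a k := by
    intro k
    rw [ha, ha, Function.iterate_add_apply, h]
  have hrec : ∀ k, a (k + 2) - a k
      = (a (k+1) ^ 2 - 2) * (a (k+1) ^ 2 - 3) * (a (k+1) ^ 2 - 6) := by
    intro k
    rw [ha, ha, ha, Function.iterate_succ_apply', Function.iterate_succ_apply']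
    simp [henonMap]
  have hden : ∀ k, (a k).den = 1 := by
    obtain ⟨m, hm⟩ := henon_max (fun k => (a k).den) n hn (fun k => by simp only [hper])
    have h1 := henon_den (a (m+1))
    rw [← hrec] at h1
    have h2 := Nat.le_of_dvd (Nat.mul_pos (a (m+2)).den_pos (a m).den_pos)
      (Rat.sub_den_dvd (a (m+2)) (a m))
    have h3 := Nat.mul_le_mul (hm (m+2)) (hm m)
    intro k
    have h4 := hm k
    have h5 := (a k).den_pos
    generalize (a (m+1)).den = D at *
    by_contra hne
    have hD : 2 ≤ D := by omega
    have h6 : D ^ 2 < D ^ 6 := Nat.pow_lt_pow_right (by omega) (by omega)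
    nlinarith
  obtain ⟨z, hz⟩ : ∃ z : ℕ → ℤ, ∀ k, a k = z k :=
    ⟨fun k => (a k).num, fun k => ((Rat.den_eq_one_iff _).1 (hden k)).symm⟩
  have zper : ∀ k, z (k + n) = z k := by
    intro k; have := hper k; rw [hz, hz] at this; exact_mod_cast this
  have zrec : ∀ k, z (k + 2) - z k
      = (z (k+1) ^ 2 - 2) * (z (k+1) ^ 2 - 3) * (z (k+1) ^ 2 - 6) := by
    intro k; have := hrec k; rw [hz, hz, hz] at this; exact_mod_cast this
  have hb : ∀ k, |z k| ≤ 2 := by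
    obtain ⟨m, hm⟩ := henon_max (fun k => |z k|) n hn (fun k => by simp only [zper])
    intro k
    refine (hm k).trans ?_
    by_contra! hlt
    have h1 := zrec m
    rw [← sq_abs (z (m+1))] at h1
    have h2 := abs_le.1 (hm (m+2))
    have h3 := abs_le.1 (hm m)
    generalize |z (m+1)| = M at *
    have h4 : 3 ≤ M := by omega
    have h5 : 3 * M ≤ M ^ 2 := by nlinarith
    have h6 : 3 * M * 1 ≤ (M^2-2) * (M^2-3) := by nlinarith
    have h7 : (3 * M * 1) * 1 ≤ (M^2-2) * (M^2-3) * (M^2-6) := by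
      apply mul_le_mul <;> nlinarith
    linarith [h2.2, h3.1]
  have hdec : ∀ k, z (k + 2) - z k = -4 := by
    intro k
    have h1 := zrec k
    have h2 := abs_le.1 (hb (k+2))
    have h3 := abs_le.1 (hb k)
    obtain ⟨h4, h5⟩ := abs_le.1 (hb (k+1))
    generalize z (k+1) = w at *
    interval_cases w <;> norm_num at h1 <;> omega
  have e1 := hdec 0
  have e2 := hdec 2
  have h2 := abs_le.1 (hb 4)
  have h3 := abs_le.1 (hb 0)
  norm_num at e1 e2
  omega
end

section
/- There exists N such that for every prime p > N for which 2 is a square modulo p, there exists (x,y,z) ∈ 𝔽_p³ with x² + y² + z² = xyz, z² = 2, (x,y) ≠ (0,0), and (x,y,z) is a periodic point of f of exact period 4 (i.e., f⁴(x,y,z) = (x,y,z) and fᵐ(x,y,z) ≠ (x,y,z) for m = 1, 2, 3). -/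
theorem stmt_17 :
    ∃ N : ℕ, ∀ p : ℕ, p.Prime → p > N → IsSquare (2 : ZMod p) →
      ∃ x y z : ZMod p,
        x ^ 2 + y ^ 2 + z ^ 2 = x * y * z ∧
        z ^ 2 = 2 ∧
        (x, y) ≠ (0, 0) ∧
        markoffMap^[4] (x, y, z) = (x, y, z) ∧
        ∀ m : ℕ, 1 ≤ m → m < 4 → markoffMap^[m] (x, y, z) ≠ (x, y, z) := by
  refine ⟨2, ?_⟩
  intro p hp hp2 ⟨z, hz⟩
  haveI : Fact p.Prime := ⟨hp⟩
  obtain ⟨u, v, huv⟩ := ZMod.sq_add_sq p (-2)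
  have h2 : (2 : ZMod p) ≠ 0 := by
    intro h
    have h' : ((2 : ℕ) : ZMod p) = 0 := by exact_mod_cast h
    rw [ZMod.natCast_eq_zero_iff] at h'
    have := Nat.le_of_dvd (by norm_num) h'
    omega
  have hz2 : z ^ 2 = 2 := by rw [hz]; ring
  have hM : (u + v) ^ 2 + (v * z) ^ 2 + z ^ 2 = (u + v) * (v * z) * z := by
    linear_combination huv + (v ^ 2 + 1 - (u + v) * v) * hz2
  generalize u + v = x at hM
  generalize v * z = y at hM
  have hne : (x, y) ≠ (0, 0) := by
    intro h
    obtain ⟨rfl, rfl⟩ := Prod.mk.inj h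
    apply h2
    linear_combination hM - hz2
  have f2 : ∀ a b : ZMod p, markoffMap (markoffMap (a, b, z)) = (-a, -b, z) := by
    intro a b
    simp only [markoffMap, Prod.mk.injEq, and_true]
    constructor
    · linear_combination (a * (z ^ 2 - 1) - z * b) * hz2
    · linear_combination a * z * hz2 - b * hz2
  have h2ne : markoffMap (markoffMap (x, y, z)) ≠ (x, y, z) := by
    rw [f2]
    intro h
    simp only [Prod.mk.injEq, and_true] at h
    apply hne
    have hx : x = 0 := (mul_eq_zero.mp (by linear_combination -h.1 : 2 * x = 0)).resolve_left h2
    have hy : y = 0 := (mul_eq_zero.mp (by linear_combination -h.2 : 2 * y = 0)).resolve_left h2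
    rw [hx, hy]
  have h4 : markoffMap (markoffMap (markoffMap (markoffMap (x, y, z)))) = (x, y, z) := by
    rw [f2, f2, neg_neg, neg_neg]
  refine ⟨x, y, z, hM, hz2, hne, h4, ?_⟩
  intro m hm1 hm4 h
  interval_cases m
  · change markoffMap (x, y, z) = (x, y, z) at h
    exact h2ne (by rw [h, h])
  · exact h2ne h
  · change markoffMap (markoffMap (markoffMap (x, y, z))) = (x, y, z) at h
    rw [h] at h4
    exact h2ne (by rw [h4, h4])
end

section
/- There exists N such that for every prime p > N for which 3 is a square modulo p, there exists (x,y,z) ∈ 𝔽_p³ with x² + y² + z² = xyz, z² = 3, (x,y) ≠ (0,0), and (x,y,z) is a periodic point of f of exact period 6 (i.e., f⁶(x,y,z) = (x,y,z) and fᵐ(x,y,z) ≠ (x,y,z) for 1 ≤ m ≤ 5). -/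
theorem markoff_step {R : Type*} [CommRing R] (x y z : R) (hz : z ^ 2 = 3) :
    markoffMap (x, y, z) = (2 * x - z * y, z * x - y, z) := by
  simp only [markoffMap, Prod.mk.injEq, and_true]
  linear_combination x * hz

theorem markoff_step2 {R : Type*} [CommRing R] (x y z : R) (hz : z ^ 2 = 3) :
    markoffMap^[2] (x, y, z) = (x - z * y, z * x - 2 * y, z) := by
  simp only [Function.iterate_succ, Function.iterate_zero, Function.comp, id, markoff_step _ _ _ hz,
    Prod.mk.injEq, and_true]
  constructor
  · linear_combination (-x) * hz
  · linear_combination (-y) * hz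

theorem markoff_step3 {R : Type*} [CommRing R] (x y z : R) (hz : z ^ 2 = 3) :
    markoffMap^[3] (x, y, z) = (-x, -y, z) := by
  rw [Function.iterate_succ_apply', markoff_step2 _ _ _ hz, markoff_step _ _ _ hz]
  simp only [Prod.mk.injEq, and_true]
  constructor
  · linear_combination (-x) * hz
  · linear_combination (-y) * hz

theorem stmt_18 :
    ∃ N : ℕ, ∀ p : ℕ, p.Prime → p > N → IsSquare (3 : ZMod p) →
      ∃ x y z : ZMod p,
        x ^ 2 + y ^ 2 + z ^ 2 = x * y * z ∧
        z ^ 2 = 3 ∧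
        (x, y) ≠ (0, 0) ∧
        markoffMap^[6] (x, y, z) = (x, y, z) ∧
        ∀ m : ℕ, 1 ≤ m → m < 6 → markoffMap^[m] (x, y, z) ≠ (x, y, z) := by
  refine ⟨3, fun p hp hpN h3 => ?_⟩
  haveI : Fact p.Prime := ⟨hp⟩
  obtain ⟨z, hz'⟩ := h3
  have hz : z ^ 2 = 3 := by rw [hz']; ring
  have h3 : (3 : ZMod p) ≠ 0 := by
    intro h
    have h' : ((3 : ℕ) : ZMod p) = 0 := by exact_mod_cast h
    rw [ZMod.natCast_eq_zero_iff] at h'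
    exact absurd (Nat.le_of_dvd (by norm_num) h') (by omega)
  have h2 : (2 : ZMod p) ≠ 0 := by
    intro h
    have h' : ((2 : ℕ) : ZMod p) = 0 := by exact_mod_cast h
    rw [ZMod.natCast_eq_zero_iff] at h'
    exact absurd (Nat.le_of_dvd (by norm_num) h') (by omega)
  obtain ⟨a, b, hab⟩ := ZMod.sq_add_sq p (-3)
  obtain ⟨x, hx⟩ : ∃ x, x = a + z * b := ⟨_, rfl⟩
  obtain ⟨y, hy⟩ : ∃ y, y = 2 * b := ⟨_, rfl⟩
  have hM : x ^ 2 + y ^ 2 + z ^ 2 = x * y * z := by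
    subst hx hy
    linear_combination hab + (1 - b ^ 2) * hz
  have hne : ¬ (x = 0 ∧ y = 0) := by
    rintro ⟨h, h'⟩
    rw [h, h'] at hM
    apply h3
    linear_combination hM - hz
  have h6 : markoffMap^[6] (x, y, z) = (x, y, z) := by
    rw [show 6 = 3 + 3 from rfl, Function.iterate_add_apply, markoff_step3 _ _ _ hz,
      markoff_step3 _ _ _ hz]
    simp
  refine ⟨x, y, z, hM, hz, by simpa using hne, h6, ?_⟩
  intro m hm1 hm6 h
  apply hne
  interval_cases m
  · rw [Function.iterate_one, markoff_step _ _ _ hz] at h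
    simp only [Prod.mk.injEq, and_true] at h
    obtain ⟨e1, e2⟩ := h
    constructor
    · linear_combination (-2) * e1 + z * e2 - x * hz
    · linear_combination (-z) * e1 + e2 - y * hz
  · rw [markoff_step2 _ _ _ hz] at h
    simp only [Prod.mk.injEq, and_true] at h
    obtain ⟨e1, e2⟩ := h
    have hy0 : y = 0 := by
      apply (mul_eq_zero.mp _).resolve_left h3
      linear_combination (-z) * e1 - y * hz
    refine ⟨(mul_eq_zero.mp ?_).resolve_left h3, hy0⟩
    linear_combination z * e2 - x * hz + 3 * z * hy0
  · rw [markoff_step3 _ _ _ hz] at h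
    simp only [Prod.mk.injEq, and_true] at h
    obtain ⟨e1, e2⟩ := h
    refine ⟨(mul_eq_zero.mp ?_).resolve_left h2, (mul_eq_zero.mp ?_).resolve_left h2⟩
    · linear_combination -e1
    · linear_combination -e2
  · rw [show 4 = 3 + 1 from rfl, Function.iterate_add_apply, Function.iterate_one,
      markoff_step _ _ _ hz, markoff_step3 _ _ _ hz] at h
    simp only [Prod.mk.injEq, and_true] at h
    obtain ⟨e1, e2⟩ := h
    have hx0 : x = 0 := by
      apply (mul_eq_zero.mp _).resolve_left h3
      linear_combination -z * e2 - x * hz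
    refine ⟨hx0, (mul_eq_zero.mp ?_).resolve_left h3⟩
    linear_combination z * e1 - y * hz + 3 * z * hx0
  · rw [show 5 = 3 + 2 from rfl, Function.iterate_add_apply,
      markoff_step2 _ _ _ hz, markoff_step3 _ _ _ hz] at h
    simp only [Prod.mk.injEq, and_true] at h
    obtain ⟨e1, e2⟩ := h
    constructor
    · linear_combination e1 - z * e2 - x * hz
    · linear_combination z * e1 - 2 * e2 - y * hz
end
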